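/- arXiv:1304.1975 — 2 statements merged into one kernel-verified Lean document; each statement's English description precedes it below -/
import Mathlib

section
/- Let T = M_w E M_u be bounded on L²(Σ). If T is centered, then |E(uw)|² = E(|u|²)·E(|w|²) μ-a.e. on the set S(E(uw)·E(w)·E(u)). -/
/-! Only one of the commutation relations is needed: that `T*T` commutes with `TT*`.

Since `T* = M_ū E M_w̄` (`adjoint_apply`), repeated use of the pull-out property
(`apply_of_eq_mul`) evaluates both orders of the product on the vector `ū ∈ L²`. Write
`a = E(uw)`, `U = E(|u|²)`, `W = E(|w|²)`. The result is
`ā U a W · ū = U W ā U · w` almost everywhere. Multiplying by `w̄` and applying `E`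
(`condExp_relation`) gives `ā U W · |a|² = ā U W · U W`. Where `a ≠ 0`, neither `U` nor `W` vanishes
(`condExp_mul_eq_zero`), so the factor `ā U W` cancels and `|a|² = U W`. Thus the identity holds on
all of `S(E(uw))`, in particular on the smaller set in the statement.

The products of `𝒜`-measurable coefficients with integrable functions need not be integrable; in
`adjoint_apply` and `condExp_relation` this is handled by first multiplying by the bounded,
nowhere vanishing `𝒜`-measurable factor `damp`.
-/

open MeasureTheory ComplexConjugate

/-- A bounded operator `A` on a Hilbert space is *centered* if the family
`{A*ⁿ Aⁿ, Aᵏ A*ᵏ : n, k ≥ 0}` consists of mutually commuting operators. -/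
def Centered {H : Type*} [NormedAddCommGroup H] [InnerProductSpace ℂ H] [CompleteSpace H]
    (A : H →L[ℂ] H) : Prop :=
  ∀ B ∈ {B : H →L[ℂ] H | ∃ n : ℕ,
      B = (ContinuousLinearMap.adjoint A) ^ n * A ^ n ∨
      B = A ^ n * (ContinuousLinearMap.adjoint A) ^ n},
    ∀ C ∈ {C : H →L[ℂ] H | ∃ k : ℕ,
      C = (ContinuousLinearMap.adjoint A) ^ k * A ^ k ∨
      C = A ^ k * (ContinuousLinearMap.adjoint A) ^ k},
      Commute B C

section Helpers

variable {X : Type*} {m m0 : MeasurableSpace X} {μ : Measure X}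

/-- Pull-out property for complex products, with the integrable product `q` given up to a.e.
equality. -/
theorem condExp_pull_left {c p q : X → ℂ} (hc : StronglyMeasurable[m] c) (hp : Integrable p μ)
    (hq : Integrable q μ) (h : q =ᵐ[μ] fun x => c x * p x) :
    μ[q | m] =ᵐ[μ] fun x => c x * (μ[p | m]) x :=
  (condExp_congr_ae h).trans
    (condExp_bilin_of_stronglyMeasurable_left (ContinuousLinearMap.mul ℝ ℂ) hc
      (hq.congr h) hp)

/-- Conditional expectation commutes with complex conjugation. -/
theorem condExp_conj {f : X → ℂ} (hf : Integrable f μ) :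
    μ[fun x => conj (f x) | m] =ᵐ[μ] fun x => conj ((μ[f | m]) x) :=
  (Complex.conjCLE.toContinuousLinearMap.comp_condExp_comm (m := m) hf).symm

theorem condExp_ofReal_complex {f : X → ℝ} (hf : Integrable f μ) :
    μ[fun x => ((f x : ℝ) : ℂ) | m] =ᵐ[μ] fun x => (((μ[f | m]) x : ℝ) : ℂ) :=
  (Complex.ofRealCLM.comp_condExp_comm (m := m) hf).symm

/-- The damping factor `1 / (1 + ‖c‖)`, used to turn an arbitrary `𝒜`-measurable multiplier `c`
into a bounded one. -/
noncomputable def damp (c : X → ℂ) (x : X) : ℂ := ((1 + ‖c x‖ : ℝ) : ℂ)⁻¹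

theorem norm_damp (c : X → ℂ) (x : X) : ‖damp c x‖ = (1 + ‖c x‖)⁻¹ := by
  rw [damp, norm_inv, Complex.norm_real, Real.norm_of_nonneg (by positivity)]

theorem norm_damp_le (c : X → ℂ) (x : X) : ‖damp c x‖ ≤ 1 := by
  rw [norm_damp]
  exact inv_le_one_of_one_le₀ (by linarith [norm_nonneg (c x)])

theorem norm_damp_mul_le (c : X → ℂ) (x : X) : ‖damp c x * c x‖ ≤ 1 := by
  rw [norm_mul, norm_damp, inv_mul_le_iff₀ (by positivity)]
  linarith

theorem damp_ne_zero (c : X → ℂ) (x : X) : damp c x ≠ 0 := by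
  rw [← norm_pos_iff, norm_damp]
  positivity

theorem stronglyMeasurable_damp {c : X → ℂ} (hc : StronglyMeasurable[m] c) :
    StronglyMeasurable[m] (damp c) := by
  have h : Measurable[m] c := hc.measurable
  refine Measurable.stronglyMeasurable ?_
  unfold damp
  fun_prop

theorem conj_damp (c : X → ℂ) (x : X) : conj (damp c x) = damp c x := by
  simp [damp]

/-- A relation `c p = d q` with `𝒜`-measurable coefficients passes to conditional expectations,
without any integrability of the products. -/
theorem condExp_relation (hm : m ≤ m0) {c d p q : X → ℂ}
    (hc : StronglyMeasurable[m] c) (hd : StronglyMeasurable[m] d)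
    (hp : Integrable p μ) (hq : Integrable q μ)
    (h : ∀ᵐ x ∂μ, c x * p x = d x * q x) :
    ∀ᵐ x ∂μ, c x * (μ[p | m]) x = d x * (μ[q | m]) x := by
  have hr : StronglyMeasurable[m] (fun x => damp c x * damp d x) :=
    (stronglyMeasurable_damp hc).mul (stronglyMeasurable_damp hd)
  have hrc : StronglyMeasurable[m] (fun x => damp c x * damp d x * c x) := hr.mul hc
  have hrd : StronglyMeasurable[m] (fun x => damp c x * damp d x * d x) := hr.mul hd
  have hip : Integrable (fun x => damp c x * damp d x * c x * p x) μ := by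
    refine hp.bdd_mul (c := 1) (hrc.mono hm).aestronglyMeasurable (ae_of_all _ fun x => ?_)
    rw [mul_right_comm, norm_mul]
    exact mul_le_one₀ (norm_damp_mul_le c x) (norm_nonneg _) (norm_damp_le d x)
  have hiq : Integrable (fun x => damp c x * damp d x * d x * q x) μ := by
    refine hq.bdd_mul (c := 1) (hrd.mono hm).aestronglyMeasurable (ae_of_all _ fun x => ?_)
    rw [mul_assoc, norm_mul]
    exact mul_le_one₀ (norm_damp_le c x) (norm_nonneg _) (norm_damp_mul_le d x)
  have h1 := condExp_pull_left hrc hp hip (ae_eq_refl _)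
  have h2 := condExp_pull_left hrd hq hip (by
    filter_upwards [h] with x hx
    rw [mul_assoc, hx]; ring)
  filter_upwards [h1, h2] with x hx1 hx2
  have h3 := hx1.symm.trans hx2
  have hne : damp c x * damp d x ≠ 0 := mul_ne_zero (damp_ne_zero c x) (damp_ne_zero d x)
  apply mul_left_cancel₀ hne
  linear_combination h3

/-- `E(uw)` vanishes wherever `E(|u|²)` does, since `u` itself vanishes there. -/
theorem condExp_mul_eq_zero (hm : m ≤ m0) [SigmaFinite (μ.trim hm)] {u w : X → ℂ}
    (hu2 : Integrable (fun x => ‖u x‖ ^ 2) μ) (huw : Integrable (fun x => u x * w x) μ) :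
    ∀ᵐ x ∂μ, (μ[fun y => ‖u y‖ ^ 2 | m]) x = 0 → (μ[fun y => u y * w y | m]) x = 0 := by
  set A : Set X := {x | (μ[fun y => ‖u y‖ ^ 2 | m]) x = 0} with hA
  have hAm : MeasurableSet[m] A :=
    stronglyMeasurable_condExp.measurable (measurableSet_singleton (0 : ℝ))
  have h0 : ∫ x in A, ‖u x‖ ^ 2 ∂μ = 0 := by
    rw [← setIntegral_condExp hm hu2 hAm]
    exact setIntegral_eq_zero_of_forall_eq_zero fun x hx => hx
  rw [setIntegral_eq_zero_iff_of_nonneg_ae (ae_of_all _ fun x => by positivity)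
    hu2.integrableOn] at h0
  have h1 : ∀ᵐ x ∂μ, x ∈ A → ‖u x‖ ^ 2 = 0 := (ae_restrict_iff' (hm A hAm)).1 h0
  have h2 : A.indicator (fun x => u x * w x) =ᵐ[μ] 0 := by
    filter_upwards [h1] with x hx
    by_cases hxA : x ∈ A
    · have : u x = 0 := by simpa using hx hxA
      simp [this]
    · simp [hxA]
  have h3 := (condExp_indicator (m := m) huw hAm).symm.trans (condExp_congr_ae h2)
  rw [condExp_zero] at h3
  filter_upwards [h3] with x hx hxA
  rwa [Set.indicator_of_mem (show x ∈ A from hxA)] at hx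

/-- `f ↦ b E(a f)` sends `c p` to `b c E(a p)` when `c` is `𝒜`-measurable. -/
theorem apply_of_eq_mul {a b c p : X → ℂ} {A : Lp ℂ 2 μ →L[ℂ] Lp ℂ 2 μ} (ha : MemLp a 2 μ)
    (hA : ∀ f : Lp ℂ 2 μ, ⇑(A f) =ᵐ[μ] fun x => b x * (μ[fun y => a y * f y | m]) x)
    {h : Lp ℂ 2 μ} (hh : ⇑h =ᵐ[μ] fun x => c x * p x)
    (hc : StronglyMeasurable[m] c) (hp : Integrable (fun y => a y * p y) μ) :
    ⇑(A h) =ᵐ[μ] fun x => (c x * (μ[fun y => a y * p y | m]) x) * b x := by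
  have h1 := condExp_pull_left (q := fun y => a y * h y) hc hp (ha.integrable_mul (Lp.memLp h)) (by
    filter_upwards [hh] with x hx
    rw [hx]; ring)
  filter_upwards [hA h, h1] with x hx hx1
  rw [hx, hx1, mul_comm]

/-- The adjoint of `M_w E M_u` is `M_ū E M_w̄`. -/
theorem adjoint_apply (hm : m ≤ m0) [SigmaFinite (μ.trim hm)] {u w : X → ℂ}
    (hu : MemLp u 2 μ) (hw : MemLp w 2 μ) {T : Lp ℂ 2 μ →L[ℂ] Lp ℂ 2 μ}
    (hT : ∀ f : Lp ℂ 2 μ, ⇑(T f) =ᵐ[μ] fun x => w x * (μ[fun y => u y * f y | m]) x)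
    (f : Lp ℂ 2 μ) :
    ⇑(ContinuousLinearMap.adjoint T f) =ᵐ[μ]
      fun x => conj (u x) * (μ[fun y => conj (w y) * f y | m]) x := by
  set k : X → ℂ := μ[fun y => conj (w y) * f y | m] with hk
  have hkm : StronglyMeasurable[m] k := stronglyMeasurable_condExp
  have hrm : StronglyMeasurable[m] (damp k) := stronglyMeasurable_damp hkm
  have hr0 : AEStronglyMeasurable (damp k) μ := (hrm.mono hm).aestronglyMeasurable
  have hk0 : AEStronglyMeasurable k μ := (hkm.mono hm).aestronglyMeasurable
  have hdamp : ∀ g : Lp ℂ 2 μ, MemLp (fun x => damp k x * g x) 2 μ := fun g =>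
    (Lp.memLp g).of_le_mul (c := 1) (hr0.mul (Lp.aestronglyMeasurable g)) (ae_of_all _ fun x => by
      rw [norm_mul]
      exact mul_le_mul_of_nonneg_right (norm_damp_le k x) (norm_nonneg _))
  have hconj : ∀ {v : X → ℂ}, MemLp v 2 μ → MemLp (fun x => conj (v x)) 2 μ := fun hv => hv.star
  have hwf : Integrable (fun y => conj (w y) * f y) μ := (hconj hw).integrable_mul (Lp.memLp f)
  have hwf' : Integrable (fun y => w y * conj (f y)) μ :=
    hw.integrable_mul (hconj (Lp.memLp f))
  have h2mem : MemLp (fun x => damp k x * k x * conj (u x)) 2 μ :=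
    (hconj hu).of_le_mul (c := 1) ((hr0.mul hk0).mul (hconj hu).1) (ae_of_all _ fun x => by
      rw [norm_mul]
      exact mul_le_mul_of_nonneg_right (norm_damp_mul_le k x) (norm_nonneg _))
  have h1mem := hdamp (ContinuousLinearMap.adjoint T f)
  have key : h1mem.toLp _ = h2mem.toLp _ := by
    refine ext_inner_right ℂ fun g => ?_
    have hug : Integrable (fun y => u y * g y) μ := hu.integrable_mul (Lp.memLp g)
    set G : Lp ℂ 2 μ := (hdamp g).toLp _ with hG
    have hGae : ⇑G =ᵐ[μ] fun x => damp k x * g x := (hdamp g).coeFn_toLp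
    have e1 : inner ℂ (h1mem.toLp _) g = inner ℂ (ContinuousLinearMap.adjoint T f) G := by
      rw [L2.inner_def, L2.inner_def]
      refine integral_congr_ae ?_
      filter_upwards [h1mem.coeFn_toLp, hGae] with x hx1 hx2
      rw [hx1, hx2]
      simp only [RCLike.inner_apply, map_mul, conj_damp]
      ring
    rw [e1, ContinuousLinearMap.adjoint_inner_left, L2.inner_def, L2.inner_def]
    -- Both sides equal `∫ conj k · damp k · u g`; moving `E` from `u g` to `w conj f` is the
    -- self-adjointness of `E`, here two instances of the pull-out property.
    have hTG := apply_of_eq_mul hu hT hGae hrm hug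
    have i1 : Integrable (fun x => conj (f x) * (T G) x) μ :=
      (hconj (Lp.memLp f)).integrable_mul (Lp.memLp (T G))
    set e : X → ℂ := fun x => damp k x * (μ[fun y => u y * g y | m]) x with he
    have hem : StronglyMeasurable[m] e := hrm.mul stronglyMeasurable_condExp
    have p1 := condExp_pull_left hem hwf' i1 (by
      filter_upwards [hTG] with x hx
      rw [hx]; ring)
    have hkc : μ[fun y => w y * conj (f y) | m] =ᵐ[μ] fun x => conj (k x) := by
      refine (condExp_congr_ae (ae_of_all _ fun x => ?_)).trans (condExp_conj (m := m) hwf)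
      simp
    have hkcm : StronglyMeasurable[m] (fun x => damp k x * conj (k x)) :=
      hrm.mul (RCLike.continuous_conj.comp_stronglyMeasurable hkm)
    have i2 : Integrable (fun x => damp k x * conj (k x) * (u x * g x)) μ := by
      refine hug.bdd_mul (c := 1) (hkcm.mono hm).aestronglyMeasurable (ae_of_all _ fun x => ?_)
      have := norm_damp_mul_le k x
      rwa [norm_mul, RCLike.norm_conj, ← norm_mul]
    have p2 := condExp_pull_left hkcm hug i2 (ae_eq_refl _)
    calc ∫ x, inner ℂ (f x) ((T G) x) ∂μ = ∫ x, conj (f x) * (T G) x ∂μ := by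
          refine integral_congr_ae (ae_of_all _ fun x => ?_)
          simp [RCLike.inner_apply, mul_comm]
      _ = ∫ x, (μ[fun x => conj (f x) * (T G) x | m]) x ∂μ := (integral_condExp hm).symm
      _ = ∫ x, (μ[fun x => damp k x * conj (k x) * (u x * g x) | m]) x ∂μ := by
          refine integral_congr_ae ?_
          filter_upwards [p1, p2, hkc] with x h1 h2 h3
          rw [h1, h2, h3, he]; ring
      _ = ∫ x, damp k x * conj (k x) * (u x * g x) ∂μ := integral_condExp hm
      _ = _ := by
          refine integral_congr_ae ?_
          filter_upwards [h2mem.coeFn_toLp] with x hx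
          rw [hx]
          simp only [RCLike.inner_apply, map_mul, conj_damp, Complex.conj_conj]
          ring
  have h3 := h1mem.coeFn_toLp
  rw [key] at h3
  filter_upwards [h3.symm.trans h2mem.coeFn_toLp] with x hx
  apply mul_left_cancel₀ (damp_ne_zero k x)
  rw [hx]; ring

end Helpers

/-- **Theorem 2.5 (a).** If the bounded weighted conditional type operator
`T = M_w E M_u` on `L²(Σ)` is centered, then `|E(uw)|² = E(|u|²) E(|w|²)`
on `S(E(uw) E(w) E(u))`. -/
theorem stmt_4 {X : Type*} [m0 : MeasurableSpace X] {μ : Measure X} [μ.IsComplete]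
    [SigmaFinite μ] {m : MeasurableSpace X} (hm : m ≤ m0) [SigmaFinite (μ.trim hm)]
    (u w : X → ℂ) (hu : AEMeasurable u μ) (hw : AEMeasurable w μ)
    (hui : Integrable u μ) (hwi : Integrable w μ)
    (hu2 : Integrable (fun x => ‖u x‖ ^ 2) μ) (hw2 : Integrable (fun x => ‖w x‖ ^ 2) μ)
    (huw : Integrable (fun x => u x * w x) μ)
    (hintu : ∀ f : Lp ℂ 2 μ, Integrable (fun x => u x * f x) μ)
    (T : Lp ℂ 2 μ →L[ℂ] Lp ℂ 2 μ)
    (hT : ∀ f : Lp ℂ 2 μ, ⇑(T f) =ᵐ[μ] fun x => w x * (μ[fun y => u y * f y | m]) x)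
    (hc : Centered T) :
    ∀ᵐ x ∂μ, (μ[fun y => u y * w y | m]) x * (μ[w | m]) x * (μ[u | m]) x ≠ 0 →
      ‖(μ[fun y => u y * w y | m]) x‖ ^ 2 =
        (μ[fun y => ‖u y‖ ^ 2 | m]) x * (μ[fun y => ‖w y‖ ^ 2 | m]) x := by
  have hu' : MemLp u 2 μ := (memLp_two_iff_integrable_sq_norm hu.aestronglyMeasurable).2 hu2
  have hw' : MemLp w 2 μ := (memLp_two_iff_integrable_sq_norm hw.aestronglyMeasurable).2 hw2
  have hub : MemLp (fun x => conj (u x)) 2 μ := hu'.star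
  have hwb : MemLp (fun x => conj (w x)) 2 μ := hw'.star
  set S := ContinuousLinearMap.adjoint T with hS
  have hSf := adjoint_apply hm hu' hw' hT
  rw [← hS] at hSf
  have iuu : Integrable (fun x => u x * conj (u x)) μ := hu'.integrable_mul hub
  have iww : Integrable (fun x => conj (w x) * w x) μ := hwb.integrable_mul hw'
  have iwu : Integrable (fun x => conj (w x) * conj (u x)) μ := hwb.integrable_mul hub
  -- The commutation of `T*T` with `TT*` is tested on the single vector `conj u`.
  set f : Lp ℂ 2 μ := hub.toLp _ with hf
  have hf1 : ⇑f =ᵐ[μ] fun x => 1 * conj (u x) := by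
    filter_upwards [hub.coeFn_toLp] with x hx
    rw [hf, hx, one_mul]
  have m1 : StronglyMeasurable[m] (fun _ : X => (1 : ℂ)) := stronglyMeasurable_const
  set a := μ[fun y => u y * w y | m] with ha
  set a' := μ[fun y => conj (w y) * conj (u y) | m] with ha'
  set U := μ[fun y => u y * conj (u y) | m] with hU
  set W := μ[fun y => conj (w y) * w y | m] with hW
  have ma : StronglyMeasurable[m] a := stronglyMeasurable_condExp
  have ma' : StronglyMeasurable[m] a' := stronglyMeasurable_condExp
  have mU : StronglyMeasurable[m] U := stronglyMeasurable_condExp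
  have mW : StronglyMeasurable[m] W := stronglyMeasurable_condExp
  have s1 := apply_of_eq_mul hwb hSf hf1 m1 iwu
  have s2 := apply_of_eq_mul hu' hT s1 (m1.mul ma') iuu
  have s3 := apply_of_eq_mul hu' hT s2 ((m1.mul ma').mul mU) huw
  have s4 := apply_of_eq_mul hwb hSf s3 (((m1.mul ma').mul mU).mul ma) iww
  have t1 := apply_of_eq_mul hu' hT hf1 m1 iuu
  have t2 := apply_of_eq_mul hwb hSf t1 (m1.mul mU) iww
  have t3 := apply_of_eq_mul hwb hSf t2 ((m1.mul mU).mul mW) iwu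
  have t4 := apply_of_eq_mul hu' hT t3 (((m1.mul mU).mul mW).mul ma') iuu
  have hcomm : S (T (T (S f))) = T (S (S (T f))) := by
    have h := hc (S ^ 1 * T ^ 1) ⟨1, Or.inl rfl⟩ (T ^ 1 * S ^ 1) ⟨1, Or.inr rfl⟩
    have h' := congrArg (fun L : Lp ℂ 2 μ →L[ℂ] Lp ℂ 2 μ => L f) h.eq
    simpa using h'
  rw [hcomm] at s4
  -- Multiplying by `conj w` makes the right side a multiple of `|w|²`.
  have hrel := condExp_relation hm
    (c := fun x => a' x * U x * a x * W x) (d := fun x => U x * W x * a' x * U x)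
    (((ma'.mul mU).mul ma).mul mW) (((mU.mul mW).mul ma').mul mU) iwu iww (by
      filter_upwards [s4, t4] with x h1 h2
      have h3 := h1.symm.trans h2
      linear_combination (conj (w x)) * h3)
  rw [← ha', ← hW] at hrel
  have hUr : U =ᵐ[μ] fun x => (((μ[fun y => ‖u y‖ ^ 2 | m]) x : ℝ) : ℂ) := by
    refine (condExp_congr_ae (ae_of_all _ fun x => ?_)).trans (condExp_ofReal_complex hu2)
    simp [Complex.mul_conj']
  have hWr : W =ᵐ[μ] fun x => (((μ[fun y => ‖w y‖ ^ 2 | m]) x : ℝ) : ℂ) := by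
    refine (condExp_congr_ae (ae_of_all _ fun x => ?_)).trans (condExp_ofReal_complex hw2)
    simp [Complex.conj_mul']
  have haa : a' =ᵐ[μ] fun x => conj (a x) := by
    refine (condExp_congr_ae (ae_of_all _ fun x => ?_)).trans (condExp_conj huw)
    simp [mul_comm]
  have hwu : Integrable (fun x => w x * u x) μ := by simpa only [mul_comm] using huw
  have z1 := condExp_mul_eq_zero hm hu2 huw
  have z2 := condExp_mul_eq_zero hm hw2 hwu
  simp only [mul_comm (w _) (u _)] at z2
  rw [← ha] at z1 z2
  filter_upwards [hrel, hUr, hWr, haa, z1, z2] with x h1 h2 h3 h4 h5 h6 hne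
  have hax : a x ≠ 0 := left_ne_zero_of_mul (left_ne_zero_of_mul hne)
  have hU0 : U x ≠ 0 := by rw [h2]; exact_mod_cast fun h => hax (h5 h)
  have hW0 : W x ≠ 0 := by rw [h3]; exact_mod_cast fun h => hax (h6 h)
  have ha0 : a' x ≠ 0 := by rw [h4]; simpa using hax
  have h7 : a' x * a x = U x * W x := by
    apply mul_left_cancel₀ (mul_ne_zero ha0 (mul_ne_zero hU0 hW0))
    linear_combination h1
  rw [h4, h2, h3, Complex.conj_mul'] at h7
  exact_mod_cast h7
end

section
/- Let T = M_w E M_u be bounded on L²(Σ). If T is a normal operator (T*T = T T*), then |E(u)|²·E(|w|²) = |E(w)|²·E(|u|²) μ-a.e. -/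
open MeasureTheory ComplexConjugate

/-!
The proof compares `‖T f‖` with `‖T* f‖` on indicators `f = 1_A` of `m`-measurable sets `A` of
finite measure on which `U = E(u)` and `W = E(w)` are bounded. The pull-out property gives
`T 1_A = w · 1_A U` and `T* 1_A = conj (u · 1_A W)` (`adjoint_indicator_ae_eq`). Normality means
`‖T f‖ = ‖T* f‖`, so `∫_A |U|² |w|² = ∫_A |W|² |u|²` for all such `A`
(`setIntegral_eq_of_normal`). Hence `|U|² |w|²` and `|W|² |u|²` have the same conditional
expectation on each set `{|U| ≤ n, |W| ≤ n}` intersected with a set of finite measure; pulling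
`|U|²` and `|W|²` out gives the identity there, and these sets exhaust `X`.
-/

section Aux

variable {X : Type*} {m : MeasurableSpace X} [m0 : MeasurableSpace X] {μ : Measure X}

/-- Self-adjointness of `E`, localized to an `m`-measurable set `A`: `∫_A w E(v) = ∫_A E(w) v`.
Boundedness of `E(w)` on `A` makes the right-hand integrand integrable. -/
lemma setIntegral_mul_condExp_comm (hm : m ≤ m0) [SigmaFinite (μ.trim hm)] {w v : X → ℂ}
    (hw : Integrable w μ) (hv : Integrable v μ) {A : Set X} (hA : MeasurableSet[m] A)
    {c : ℝ} (hc : ∀ x ∈ A, ‖(μ[w | m]) x‖ ≤ c)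
    (hwv : IntegrableOn (fun x => w x * (μ[v | m]) x) A μ) :
    ∫ x in A, w x * (μ[v | m]) x ∂μ = ∫ x, A.indicator (μ[w | m]) x * v x ∂μ := by
  have hA0 : MeasurableSet A := hm _ hA
  have hW : StronglyMeasurable[m] (A.indicator (μ[w | m])) :=
    stronglyMeasurable_condExp.indicator hA
  have hV : StronglyMeasurable[m] (A.indicator (μ[v | m])) :=
    stronglyMeasurable_condExp.indicator hA
  have hind : (A.indicator fun x => w x * (μ[v | m]) x)
      = fun x => A.indicator (μ[v | m]) x * w x := by
    funext x
    by_cases hx : x ∈ A <;> simp [hx, mul_comm]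
  have h1 : Integrable (fun x => A.indicator (μ[v | m]) x * w x) μ := by
    rw [← hind]; exact (integrable_indicator_iff hA0).2 hwv
  have h2 : Integrable (fun x => A.indicator (μ[w | m]) x * v x) μ := by
    refine hv.bdd_mul (c := max c 0) (hW.mono hm).aestronglyMeasurable (ae_of_all _ fun x => ?_)
    by_cases hx : x ∈ A
    · simpa [hx] using Or.inl (hc x hx)
    · simp [hx]
  have e1 := condExp_bilin_of_stronglyMeasurable_left (.mul ℝ ℂ) hV h1 hw
  have e2 := condExp_bilin_of_stronglyMeasurable_left (.mul ℝ ℂ) hW h2 hv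
  simp only [ContinuousLinearMap.mul_apply'] at e1 e2
  rw [← integral_indicator hA0, hind, ← integral_condExp hm, ← integral_condExp hm (f :=
    fun x => A.indicator (μ[w | m]) x * v x), integral_congr_ae e1, integral_congr_ae e2]
  congr 1
  funext x
  by_cases hx : x ∈ A <;> simp [hx, mul_comm]

variable {u w : X → ℂ} {T : Lp ℂ 2 μ →L[ℂ] Lp ℂ 2 μ}

lemma apply_indicator_ae_eq (hm : m ≤ m0) (hui : Integrable u μ)
    (hT : ∀ f : Lp ℂ 2 μ, ⇑(T f) =ᵐ[μ] fun x => w x * (μ[fun y => u y * f y | m]) x)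
    {A : Set X} (hA : MeasurableSet[m] A) (hμA : μ A ≠ ⊤) :
    ⇑(T (indicatorConstLp 2 (hm _ hA) hμA (1 : ℂ))) =ᵐ[μ]
      fun x => w x * A.indicator (μ[u | m]) x := by
  have h1 : (fun y => u y * (indicatorConstLp 2 (hm _ hA) hμA (1 : ℂ)) y) =ᵐ[μ]
      A.indicator u := by
    filter_upwards [indicatorConstLp_coeFn (p := 2) (hs := hm _ hA) (hμs := hμA) (c := (1 : ℂ))]
      with x hx
    rw [hx]
    by_cases hxA : x ∈ A <;> simp [hxA]
  filter_upwards [hT (indicatorConstLp 2 (hm _ hA) hμA (1 : ℂ)),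
    (condExp_congr_ae (m := m) h1).trans (condExp_indicator hui hA)] with x h2 h3
  rw [h2, h3]

lemma memLp_indicator_mul (hm : m ≤ m0) (hu2 : MemLp u 2 μ) {A : Set X}
    (hA : MeasurableSet[m] A) {c : ℝ} (hc : ∀ x ∈ A, ‖(μ[w | m]) x‖ ≤ c) :
    MemLp (fun x => conj (A.indicator (μ[w | m]) x * u x)) 2 μ := by
  have hW : StronglyMeasurable (A.indicator (μ[w | m])) :=
    (stronglyMeasurable_condExp.indicator hA).mono hm
  refine hu2.of_le_mul (c := max c 0) ?_ (ae_of_all _ fun x => ?_)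
  · exact Complex.continuous_conj.comp_aestronglyMeasurable (hW.aestronglyMeasurable.mul hu2.1)
  · rw [RCLike.norm_conj, norm_mul]
    refine mul_le_mul_of_nonneg_right ?_ (norm_nonneg _)
    by_cases hx : x ∈ A
    · simpa [hx] using Or.inl (hc x hx)
    · simp [hx]

/-- On the indicator of an `m`-measurable set `A`, the adjoint of `M_w E M_u` acts as
`M_{conj u} E M_{conj w}`. -/
lemma adjoint_indicator_ae_eq (hm : m ≤ m0) [SigmaFinite (μ.trim hm)]
    (hwi : Integrable w μ) (hu2 : MemLp u 2 μ)
    (hintu : ∀ f : Lp ℂ 2 μ, Integrable (fun x => u x * f x) μ)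
    (hT : ∀ f : Lp ℂ 2 μ, ⇑(T f) =ᵐ[μ] fun x => w x * (μ[fun y => u y * f y | m]) x)
    {A : Set X} (hA : MeasurableSet[m] A) (hμA : μ A ≠ ⊤)
    {c : ℝ} (hc : ∀ x ∈ A, ‖(μ[w | m]) x‖ ≤ c) :
    ⇑(ContinuousLinearMap.adjoint T (indicatorConstLp 2 (hm _ hA) hμA (1 : ℂ))) =ᵐ[μ]
      fun x => conj (A.indicator (μ[w | m]) x * u x) := by
  have hmem := memLp_indicator_mul (μ := μ) hm hu2 hA hc
  suffices hs : ContinuousLinearMap.adjoint T (indicatorConstLp 2 (hm _ hA) hμA (1 : ℂ))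
      = hmem.toLp _ by
    rw [hs]; exact hmem.coeFn_toLp
  refine ext_inner_right ℂ fun g => ?_
  rw [ContinuousLinearMap.adjoint_inner_left, L2.inner_indicatorConstLp_one, L2.inner_def]
  have hTg : IntegrableOn (fun x => w x * (μ[fun y => u y * g y | m]) x) A μ :=
    (integrableOn_Lp_of_measure_ne_top (T g) fact_one_le_two_ennreal.elim hμA).congr
      (ae_restrict_of_ae (hT g))
  rw [setIntegral_congr_ae (hm _ hA) ((hT g).mono fun x hx _ => hx),
    setIntegral_mul_condExp_comm hm hwi (hintu g) hA hc hTg]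
  refine integral_congr_ae ?_
  filter_upwards [hmem.coeFn_toLp] with x hx
  rw [hx, RCLike.inner_apply, RCLike.conj_conj]
  ring

lemma norm_sq_eq_integral (f : Lp ℂ 2 μ) : ‖f‖ ^ 2 = ∫ x, ‖f x‖ ^ 2 ∂μ := by
  have h := inner_self_eq_norm_sq_to_K (𝕜 := ℂ) f
  rw [L2.inner_def] at h
  simp only [inner_self_eq_norm_sq_to_K] at h
  have h2 : ∫ x, ((‖f x‖ ^ 2 : ℝ) : ℂ) ∂μ = ((‖f‖ ^ 2 : ℝ) : ℂ) := by
    simpa using h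
  rw [integral_complex_ofReal] at h2
  exact_mod_cast h2.symm

lemma setIntegral_eq_of_normal (hm : m ≤ m0) [SigmaFinite (μ.trim hm)]
    (hui : Integrable u μ) (hwi : Integrable w μ) (hu2 : MemLp u 2 μ)
    (hintu : ∀ f : Lp ℂ 2 μ, Integrable (fun x => u x * f x) μ)
    (hT : ∀ f : Lp ℂ 2 μ, ⇑(T f) =ᵐ[μ] fun x => w x * (μ[fun y => u y * f y | m]) x)
    (h : ContinuousLinearMap.adjoint T * T = T * ContinuousLinearMap.adjoint T)
    {A : Set X} (hA : MeasurableSet[m] A) (hμA : μ A ≠ ⊤)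
    {c : ℝ} (hc : ∀ x ∈ A, ‖(μ[w | m]) x‖ ≤ c) :
    ∫ x in A, ‖(μ[u | m]) x‖ ^ 2 * ‖w x‖ ^ 2 ∂μ
      = ∫ x in A, ‖(μ[w | m]) x‖ ^ 2 * ‖u x‖ ^ 2 ∂μ := by
  have hn : IsStarNormal T := ⟨h⟩
  have hnorm := ContinuousLinearMap.isStarNormal_iff_norm_eq_adjoint.1 hn
    (indicatorConstLp 2 (hm _ hA) hμA (1 : ℂ))
  have hsq := congrArg (· ^ 2) hnorm
  simp only [norm_sq_eq_integral] at hsq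
  rw [← integral_indicator (hm _ hA), ← integral_indicator (hm _ hA)]
  convert hsq using 1
  · refine integral_congr_ae ?_
    filter_upwards [apply_indicator_ae_eq hm hui hT hA hμA] with x hx
    rw [hx]
    by_cases hxA : x ∈ A <;> simp [hxA, mul_pow, mul_comm]
  · refine integral_congr_ae ?_
    filter_upwards [adjoint_indicator_ae_eq hm hwi hu2 hintu hT hA hμA hc] with x hx
    rw [hx]
    by_cases hxA : x ∈ A <;> simp [hxA, mul_pow]

/-- Pull-out property for `|V|²`, where `V` is `m`-measurable and bounded on the `m`-measurable
set `S`. -/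
lemma integrable_and_condExp_sq_mul (hm : m ≤ m0) {V v : X → ℂ} (hV : StronglyMeasurable[m] V)
    (hv2 : Integrable (fun x => ‖v x‖ ^ 2) μ) {S : Set X} (hS : MeasurableSet[m] S)
    {c : ℝ} (hc : ∀ x ∈ S, ‖V x‖ ≤ c) :
    Integrable (S.indicator fun x => ‖V x‖ ^ 2 * ‖v x‖ ^ 2) μ ∧
      μ[S.indicator fun x => ‖V x‖ ^ 2 * ‖v x‖ ^ 2 | m] =ᵐ[μ]
        S.indicator fun x => ‖V x‖ ^ 2 * (μ[fun y => ‖v y‖ ^ 2 | m]) x := by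
  have hVS : StronglyMeasurable[m] (S.indicator fun x => ‖V x‖ ^ 2) :=
    (hV.norm.pow 2).indicator hS
  have hind (k : X → ℝ) : (S.indicator fun x => ‖V x‖ ^ 2 * k x)
      = (S.indicator fun x => ‖V x‖ ^ 2) * k := by
    funext x
    by_cases hx : x ∈ S <;> simp [hx]
  have hint : Integrable ((S.indicator fun x => ‖V x‖ ^ 2) * fun x => ‖v x‖ ^ 2) μ := by
    refine hv2.bdd_mul (c := c ^ 2) (hVS.mono hm).aestronglyMeasurable (ae_of_all _ fun x => ?_)
    by_cases hx : x ∈ S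
    · simpa [hx] using pow_le_pow_left₀ (norm_nonneg _) (hc x hx) 2
    · simpa [hx] using sq_nonneg c
  rw [hind, hind]
  exact ⟨hint, condExp_mul_of_stronglyMeasurable_left hVS hint hv2⟩

lemma ae_eq_on_of_normal (hm : m ≤ m0) [SigmaFinite (μ.trim hm)]
    (hui : Integrable u μ) (hwi : Integrable w μ) (hu2 : MemLp u 2 μ)
    (hu2' : Integrable (fun x => ‖u x‖ ^ 2) μ) (hw2' : Integrable (fun x => ‖w x‖ ^ 2) μ)
    (hintu : ∀ f : Lp ℂ 2 μ, Integrable (fun x => u x * f x) μ)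
    (hT : ∀ f : Lp ℂ 2 μ, ⇑(T f) =ᵐ[μ] fun x => w x * (μ[fun y => u y * f y | m]) x)
    (h : ContinuousLinearMap.adjoint T * T = T * ContinuousLinearMap.adjoint T)
    {S : Set X} (hS : MeasurableSet[m] S) (hμS : μ S ≠ ⊤)
    {c : ℝ} (hcu : ∀ x ∈ S, ‖(μ[u | m]) x‖ ≤ c) (hcw : ∀ x ∈ S, ‖(μ[w | m]) x‖ ≤ c) :
    ∀ᵐ x ∂μ, x ∈ S → ‖(μ[u | m]) x‖ ^ 2 * (μ[fun y => ‖w y‖ ^ 2 | m]) x =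
      ‖(μ[w | m]) x‖ ^ 2 * (μ[fun y => ‖u y‖ ^ 2 | m]) x := by
  obtain ⟨i1, e1⟩ := integrable_and_condExp_sq_mul (μ := μ) hm
    (stronglyMeasurable_condExp (f := u) (μ := μ)) hw2' hS hcu
  obtain ⟨i2, e2⟩ := integrable_and_condExp_sq_mul (μ := μ) hm
    (stronglyMeasurable_condExp (f := w) (μ := μ)) hu2' hS hcw
  have key : μ[S.indicator fun x => ‖(μ[u | m]) x‖ ^ 2 * ‖w x‖ ^ 2 | m] =ᵐ[μ]
      μ[S.indicator fun x => ‖(μ[w | m]) x‖ ^ 2 * ‖u x‖ ^ 2 | m] := by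
    refine ae_eq_condExp_of_forall_setIntegral_eq hm i2
      (fun s _ _ => integrable_condExp.integrableOn) (fun s hs hμs => ?_)
      stronglyMeasurable_condExp.aestronglyMeasurable
    rw [setIntegral_condExp hm i1 hs, setIntegral_indicator (hm _ hS),
      setIntegral_indicator (hm _ hS)]
    exact setIntegral_eq_of_normal hm hui hwi hu2 hintu hT h (hs.inter hS)
      (measure_ne_top_of_subset Set.inter_subset_right hμS) fun x hx => hcw x hx.2
  filter_upwards [e1, e2, key] with x h1 h2 h3 hx
  rw [h1, h2] at h3
  simpa [hx] using h3

lemma ae_eq_of_normal (hm : m ≤ m0) [SigmaFinite (μ.trim hm)]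
    (hui : Integrable u μ) (hwi : Integrable w μ) (hu2m : MemLp u 2 μ)
    (hu2 : Integrable (fun x => ‖u x‖ ^ 2) μ) (hw2 : Integrable (fun x => ‖w x‖ ^ 2) μ)
    (hintu : ∀ f : Lp ℂ 2 μ, Integrable (fun x => u x * f x) μ)
    (hT : ∀ f : Lp ℂ 2 μ, ⇑(T f) =ᵐ[μ] fun x => w x * (μ[fun y => u y * f y | m]) x)
    (h : ContinuousLinearMap.adjoint T * T = T * ContinuousLinearMap.adjoint T) :
    ∀ᵐ x ∂μ, ‖(μ[u | m]) x‖ ^ 2 * (μ[fun y => ‖w y‖ ^ 2 | m]) x =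
      ‖(μ[w | m]) x‖ ^ 2 * (μ[fun y => ‖u y‖ ^ 2 | m]) x := by
  -- The exhausting sets: finite measure, and both conditional expectations bounded by `n`.
  let S : ℕ → Set X := fun n => spanningSets (μ.trim hm) n ∩
    ({x | ‖(μ[u | m]) x‖ ≤ n} ∩ {x | ‖(μ[w | m]) x‖ ≤ n})
  have hS (n : ℕ) : MeasurableSet[m] (S n) :=
    (measurableSet_spanningSets _ n).inter
      ((stronglyMeasurable_condExp.norm.measurable measurableSet_Iic).inter
        (stronglyMeasurable_condExp.norm.measurable measurableSet_Iic))
  have hμS (n : ℕ) : μ (S n) ≠ ⊤ := by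
    refine measure_ne_top_of_subset Set.inter_subset_left ?_
    have ht := trim_measurableSet_eq (μ := μ) hm (@measurableSet_spanningSets X m (μ.trim hm) _ n)
    exact ht ▸ (@measure_spanningSets_lt_top X m (μ.trim hm) _ n).ne
  have hall := ae_all_iff.2 fun n : ℕ => ae_eq_on_of_normal hm hui hwi hu2m hu2 hw2 hintu hT h
    (hS n) (hμS n) (c := n) (fun x hx => hx.2.1) (fun x hx => hx.2.2)
  filter_upwards [hall] with x hx
  obtain ⟨a, ha⟩ := exists_nat_ge (‖(μ[u | m]) x‖)
  obtain ⟨b, hb⟩ := exists_nat_ge (‖(μ[w | m]) x‖)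
  let k := spanningSetsIndex (μ.trim hm) x
  refine hx (max k (max a b)) ⟨?_, ?_, ?_⟩
  · exact monotone_spanningSets _ (le_max_left _ _) (mem_spanningSetsIndex _ x)
  · exact ha.trans (by exact_mod_cast (le_max_left a b).trans (le_max_right _ _))
  · exact hb.trans (by exact_mod_cast (le_max_right a b).trans (le_max_right _ _))

end Aux

/-- **Theorem 2.9 (b).** If the bounded weighted conditional type operator
`T = M_w E M_u` on `L²(Σ)` is normal, then `|E(u)|² E(|w|²) = |E(w)|² E(|u|²)` μ-a.e. -/
theorem stmt_10 {X : Type*} [m0 : MeasurableSpace X] {μ : Measure X} [μ.IsComplete]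
    [SigmaFinite μ] {m : MeasurableSpace X} (hm : m ≤ m0) [SigmaFinite (μ.trim hm)]
    (u w : X → ℂ) (hu : AEMeasurable u μ) (hw : AEMeasurable w μ)
    (hui : Integrable u μ) (hwi : Integrable w μ)
    (hu2 : Integrable (fun x => ‖u x‖ ^ 2) μ) (hw2 : Integrable (fun x => ‖w x‖ ^ 2) μ)
    (hintu : ∀ f : Lp ℂ 2 μ, Integrable (fun x => u x * f x) μ)
    (T : Lp ℂ 2 μ →L[ℂ] Lp ℂ 2 μ)
    (hT : ∀ f : Lp ℂ 2 μ, ⇑(T f) =ᵐ[μ] fun x => w x * (μ[fun y => u y * f y | m]) x)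
    (h : ContinuousLinearMap.adjoint T * T = T * ContinuousLinearMap.adjoint T) :
    ∀ᵐ x ∂μ, ‖(μ[u | m]) x‖ ^ 2 * (μ[fun y => ‖w y‖ ^ 2 | m]) x =
      ‖(μ[w | m]) x‖ ^ 2 * (μ[fun y => ‖u y‖ ^ 2 | m]) x := by
  have hu2m : MemLp u 2 μ := (memLp_two_iff_integrable_sq_norm hu.aestronglyMeasurable).2 hu2
  exact ae_eq_of_normal (m0 := m0) hm hui hwi hu2m hu2 hw2 hintu hT h
end
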